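/- Every graph G with m edges has at most (2m)^{3/2}/6 triangles, i.e., 6·t(G) ≤ (2m)^{3/2}, where t(G) denotes the number of triangles in G. -/

import Mathlib

namespace SimpleGraph

variable {V : Type*} [Fintype V] (G : SimpleGraph V) [DecidableRel G.Adj]

/-- The ordered pairs of adjacent vertices. -/
def adjPairs : Finset (V × V) := {p | G.Adj p.1 p.2}

theorem card_adjPairs : G.adjPairs.card = 2 * G.edgeFinset.card := by
  rw [← G.sum_degrees_eq_twice_card_edges, adjPairs, Finset.card_filter,
    Fintype.sum_prod_type]
  refine Finset.sum_congr rfl fun a _ => ?_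
  rw [← Finset.card_filter, ← G.card_neighborFinset_eq_degree, G.neighborFinset_eq_filter]

variable [DecidableEq V]

/-- The triples `((a, b), c)` of pairwise adjacent vertices. -/
def orderedTriangles : Finset (Σ _ : V × V, V) :=
  G.adjPairs.sigma fun p => G.neighborFinset p.1 ∩ G.neighborFinset p.2

theorem mem_orderedTriangles {a b c : V} :
    (⟨(a, b), c⟩ : Σ _ : V × V, V) ∈ G.orderedTriangles ↔
      G.Adj a b ∧ G.Adj a c ∧ G.Adj b c := by
  simp [orderedTriangles, adjPairs]

/-- Each triangle arises from at least six ordered triangles. -/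
theorem six_mul_card_cliqueFinset_three_le :
    6 * (G.cliqueFinset 3).card ≤ G.orderedTriangles.card := by
  have hmaps : ∀ t ∈ G.orderedTriangles,
      ({t.1.1, t.1.2, t.2} : Finset V) ∈ G.cliqueFinset 3 := by
    rintro ⟨⟨a, b⟩, c⟩ h
    rw [mem_orderedTriangles] at h
    rw [mem_cliqueFinset_iff, is3Clique_triple_iff]
    exact h
  rw [Finset.card_eq_sum_card_fiberwise hmaps, mul_comm, ← smul_eq_mul]
  refine Finset.card_nsmul_le_sum _ _ _ fun s hs => ?_
  obtain ⟨x, y, z, hxy, hxz, hyz, rfl⟩ := is3Clique_iff.1 (mem_cliqueFinset_iff.1 hs)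
  have hsub : ({⟨(x, y), z⟩, ⟨(x, z), y⟩, ⟨(y, x), z⟩, ⟨(y, z), x⟩, ⟨(z, x), y⟩, ⟨(z, y), x⟩} :
      Finset (Σ _ : V × V, V)) ⊆
      {t ∈ G.orderedTriangles | ({t.1.1, t.1.2, t.2} : Finset V) = {x, y, z}} := by
    intro t ht
    simp only [Finset.mem_insert, Finset.mem_singleton] at ht
    rw [Finset.mem_filter]
    rcases ht with rfl | rfl | rfl | rfl | rfl | rfl <;>
      refine ⟨by simp [mem_orderedTriangles, hxy, hxz, hyz, hxy.symm, hxz.symm, hyz.symm], ?_⟩ <;>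
      ext v <;> simp only [Finset.mem_insert, Finset.mem_singleton] <;> tauto
  refine le_trans (le_of_eq ?_) (Finset.card_le_card hsub)
  have h1 := hxy.ne
  have h2 := hxz.ne
  have h3 := hyz.ne
  simp [Finset.card_insert_of_notMem, h1, h2, h3, h1.symm, h2.symm, h3.symm]

theorem card_orderedTriangles_sq_le :
    G.orderedTriangles.card ^ 2 ≤ (2 * G.edgeFinset.card) ^ 3 := by
  have hcodeg (p : V × V) :
      (G.neighborFinset p.1 ∩ G.neighborFinset p.2).card ^ 2 ≤ G.degree p.1 * G.degree p.2 := by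
    rw [sq]
    exact Nat.mul_le_mul (Finset.card_le_card Finset.inter_subset_left)
      (Finset.card_le_card Finset.inter_subset_right)
  calc G.orderedTriangles.card ^ 2
      ≤ G.adjPairs.card *
          ∑ p ∈ G.adjPairs, (G.neighborFinset p.1 ∩ G.neighborFinset p.2).card ^ 2 := by
        rw [orderedTriangles, Finset.card_sigma]
        exact sq_sum_le_card_mul_sum_sq
    _ ≤ G.adjPairs.card * ∑ p : V × V, G.degree p.1 * G.degree p.2 := by
        gcongr
        exact (Finset.sum_le_sum fun p _ => hcodeg p).trans
          (Finset.sum_le_sum_of_subset (Finset.subset_univ _))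
    _ = (2 * G.edgeFinset.card) ^ 3 := by
        have hdeg : ∑ p : V × V, G.degree p.1 * G.degree p.2 =
            (∑ v, G.degree v) * ∑ v, G.degree v := by
          rw [Fintype.sum_prod_type]
          exact (Finset.sum_mul_sum _ _ (fun v => G.degree v) fun v => G.degree v).symm
        rw [card_adjPairs, hdeg, G.sum_degrees_eq_twice_card_edges]
        ring

end SimpleGraph

/-- A graph with `m` edges has at most `(2m)^{3/2}/6` triangles:
`6 t(G) ≤ (2m)^{3/2}`. -/
theorem six_triangles_le_rpow (n : ℕ) (G : SimpleGraph (Fin n))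
    [DecidableRel G.Adj] :
    (6 * ((G.cliqueFinset 3).card : ℝ))
      ≤ (2 * (G.edgeFinset.card : ℝ)) ^ ((3 : ℝ) / 2) := by
  have hT : (6 * ((G.cliqueFinset 3).card : ℝ)) ^ 2 ≤ (2 * (G.edgeFinset.card : ℝ)) ^ 3 := by
    exact_mod_cast (Nat.pow_le_pow_left G.six_mul_card_cliqueFinset_three_le 2).trans
      G.card_orderedTriangles_sq_le
  have hpow : ((2 * (G.edgeFinset.card : ℝ)) ^ ((3 : ℝ) / 2)) ^ 2 =
      (2 * (G.edgeFinset.card : ℝ)) ^ 3 := by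
    rw [← Real.rpow_mul_natCast (by positivity), ← Real.rpow_natCast _ 3]
    norm_num
  rw [← hpow] at hT
  exact (pow_le_pow_iff_left₀ (by positivity) (by positivity) two_ne_zero).1 hT
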